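/- arXiv:2501.08265 — 9 statements merged into one kernel-verified Lean document; each statement's English description precedes it below -/
import Mathlib

section
/- (Finite convergence of the restricted conjugate direction method.) Given an initial vector x₀ ∈ R(C) and a set of restricted conjugate directions p₀, …, p_{q−1}, the RCDM iterates satisfy x_q = x*_C, i.e. the method converges to the unique minimizer of φ over R(C) in at most q steps. -/
open Matrix

/-- Finite convergence of the restricted conjugate direction method (RCDM):
given an initial vector `x₀ ∈ R(C)` and restricted conjugate directions
`p₀, …, p_{q−1}` (`q = rank C`), the RCDM iterates reach the unique minimizer
`x*_C` of `φ(x) = (1/2) xᵀSx − bᵀx` over `R(C)` in at most `q` steps: `x_q = x*_C`. -/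
theorem rcdm_finite_convergence
    (n m : ℕ) (hn : 0 < n) (hm : 0 < m)
    (S : Matrix (Fin n) (Fin n) ℝ) (hS : S.PosDef)
    (C : Matrix (Fin n) (Fin m) ℝ) (b : Fin n → ℝ)
    (q : ℕ) (hq : q = C.rank)
    (p : Fin q → (Fin n → ℝ))
    (hpnz : ∀ k, p k ≠ 0)
    (hpR : ∀ k, p k ∈ LinearMap.range C.mulVecLin)
    (hconj : ∀ i j, i ≠ j → p i ⬝ᵥ S.mulVec (p j) = 0)
    (x : ℕ → (Fin n → ℝ))
    (hx0 : x 0 ∈ LinearMap.range C.mulVecLin)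
    (hrec : ∀ (k : ℕ) (hk : k < q),
        x (k + 1) = x k +
          (((b - S.mulVec (x k)) ⬝ᵥ p ⟨k, hk⟩) /
            (p ⟨k, hk⟩ ⬝ᵥ S.mulVec (p ⟨k, hk⟩))) • p ⟨k, hk⟩)
    (xstar : Fin n → ℝ)
    (hmem : xstar ∈ LinearMap.range C.mulVecLin)
    (hmin : ∀ z ∈ LinearMap.range C.mulVecLin,
        (1 / 2 : ℝ) * (xstar ⬝ᵥ S.mulVec xstar) - b ⬝ᵥ xstar ≤
          (1 / 2 : ℝ) * (z ⬝ᵥ S.mulVec z) - b ⬝ᵥ z) :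
    x q = xstar := by
  have sym : ∀ u v : Fin n → ℝ, u ⬝ᵥ S.mulVec v = v ⬝ᵥ S.mulVec u := by
    intro u v
    have hT : Sᵀ = S := by
      have := hS.1.eq
      rwa [Matrix.conjTranspose_eq_transpose_of_trivial] at this
    rw [Matrix.dotProduct_mulVec, ← Matrix.mulVec_transpose, hT, dotProduct_comm]
  have pos : ∀ u : Fin n → ℝ, u ≠ 0 → 0 < u ⬝ᵥ S.mulVec u := by
    intro u hu
    simpa using hS.dotProduct_mulVec_pos hu
  -- first-order optimality
  have opt : ∀ d ∈ LinearMap.range C.mulVecLin, (b - S.mulVec xstar) ⬝ᵥ d = 0 := by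
    intro d hd
    have key : ∀ t : ℝ, 0 ≤ (1 / 2 * (d ⬝ᵥ S.mulVec d)) * (t * t)
        + (-((b - S.mulVec xstar) ⬝ᵥ d)) * t + 0 := by
      intro t
      have h := hmin (xstar + t • d)
        (Submodule.add_mem _ hmem (Submodule.smul_mem _ t hd))
      simp only [Matrix.mulVec_add, Matrix.mulVec_smul, dotProduct_add, add_dotProduct,
        smul_dotProduct, dotProduct_smul, smul_eq_mul] at h
      rw [sub_dotProduct, dotProduct_comm (S.mulVec xstar) d]
      rw [sym xstar d] at h
      nlinarith
    have h := discrim_le_zero key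
    simp only [discrim] at h
    have : ((b - S.mulVec xstar) ⬝ᵥ d) ^ 2 ≤ 0 := by nlinarith
    exact pow_eq_zero_iff (two_ne_zero) |>.1 (le_antisymm this (sq_nonneg _))
  -- invariants of the iteration
  have inv : ∀ k, k ≤ q → x k ∈ LinearMap.range C.mulVecLin ∧
      ∀ i : Fin q, i.1 < k → (b - S.mulVec (x k)) ⬝ᵥ p i = 0 := by
    intro k
    induction k with
    | zero => exact fun _ => ⟨hx0, fun i hi => absurd hi (Nat.not_lt_zero _)⟩
    | succ k ih =>
      intro hk
      obtain ⟨h1, h2⟩ := ih (by omega)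
      have hk' : k < q := hk
      rw [hrec k hk']
      refine ⟨Submodule.add_mem _ h1 (Submodule.smul_mem _ _ (hpR _)), ?_⟩
      intro i hi
      have hp := (pos _ (hpnz ⟨k, hk'⟩)).ne'
      have hexp : ∀ a : ℝ, (b - S.mulVec (x k + a • p ⟨k, hk'⟩)) ⬝ᵥ p i
          = (b - S.mulVec (x k)) ⬝ᵥ p i - a * (p i ⬝ᵥ S.mulVec (p ⟨k, hk'⟩)) := by
        intro a
        rw [Matrix.mulVec_add, Matrix.mulVec_smul, ← sub_sub, sub_dotProduct _ (a • _),
          smul_dotProduct, smul_eq_mul, dotProduct_comm (S.mulVec (p ⟨k, hk'⟩))]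
      rw [hexp]
      by_cases hik : i = ⟨k, hk'⟩
      · subst hik
        rw [div_mul_cancel₀ _ hp, sub_self]
      · have hlt : i.1 < k := by
          have : i.1 ≠ k := fun h => hik (Fin.ext h)
          omega
        rw [h2 i hlt, hconj i _ hik, mul_zero, sub_zero]
  -- the directions span the column space
  have li : LinearIndependent ℝ p := by
    rw [Fintype.linearIndependent_iff]
    intro g hg i
    have h : (∑ j, g j • p j) ⬝ᵥ S.mulVec (p i) = 0 := by rw [hg, zero_dotProduct]
    rw [sum_dotProduct, Finset.sum_eq_single i] at h
    · rw [smul_dotProduct, smul_eq_mul] at h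
      exact (mul_eq_zero.1 h).resolve_right (pos _ (hpnz i)).ne'
    · intro j _ hj
      rw [smul_dotProduct, hconj j i hj, smul_zero]
    · simp
  have hspan : Submodule.span ℝ (Set.range p) = LinearMap.range C.mulVecLin := by
    apply Submodule.eq_of_le_of_finrank_eq
    · rw [Submodule.span_le]
      rintro _ ⟨k, rfl⟩
      exact hpR k
    · rw [finrank_span_eq_card li, Fintype.card_fin, hq]
      rfl
  obtain ⟨hq1, hq2⟩ := inv q le_rfl
  have hd : x q - xstar ∈ LinearMap.range C.mulVecLin := Submodule.sub_mem _ hq1 hmem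
  have horth : ∀ d ∈ Submodule.span ℝ (Set.range p), (b - S.mulVec (x q)) ⬝ᵥ d = 0 := by
    intro d hd
    induction hd using Submodule.span_induction with
    | mem y hy =>
      obtain ⟨i, rfl⟩ := hy
      exact hq2 i i.2
    | zero => exact dotProduct_zero _
    | add y z _ _ hy hz => rw [dotProduct_add, hy, hz, add_zero]
    | smul a y _ hy => rw [dotProduct_smul, hy, smul_zero]
  have e1 := horth _ (hspan ▸ hd)
  have e2 := opt _ hd
  by_contra hne
  have h := pos _ (sub_ne_zero.2 hne)
  have e3 : (x q - xstar) ⬝ᵥ S.mulVec (x q - xstar)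
      = (b - S.mulVec xstar) ⬝ᵥ (x q - xstar) - (b - S.mulVec (x q)) ⬝ᵥ (x q - xstar) := by
    rw [← sub_dotProduct, dotProduct_comm, Matrix.mulVec_sub]
    congr 1
    abel
  rw [e3, e1, e2] at h
  simp at h
end

section
/- (Expanding-subspace minimization of the RCDM.) Given an initial vector x₀ ∈ R(C) and a set of restricted conjugate directions p₀, …, p_{q−1}, for every k = 1, 2, …, q the RCDM iterate x_k minimizes φ over the affine subspace x₀ + span{p₀, p₁, …, p_{k−1}} ⊆ R(C). -/
open Matrix

/-- Expanding-subspace minimization of the RCDM: for every `k = 1, …, q`, the RCDM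
iterate `x_k` minimizes `φ(x) = (1/2) xᵀSx − bᵀx` over the affine subspace
`x₀ + span{p₀, …, p_{k−1}}`, which is contained in `R(C)`. -/
theorem rcdm_expanding_subspace_minimization
    (n m : ℕ) (hn : 0 < n) (hm : 0 < m)
    (S : Matrix (Fin n) (Fin n) ℝ) (hS : S.PosDef)
    (C : Matrix (Fin n) (Fin m) ℝ) (b : Fin n → ℝ)
    (q : ℕ) (hq : q = C.rank)
    (p : Fin q → (Fin n → ℝ))
    (hpnz : ∀ k, p k ≠ 0)
    (hpR : ∀ k, p k ∈ LinearMap.range C.mulVecLin)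
    (hconj : ∀ i j, i ≠ j → p i ⬝ᵥ S.mulVec (p j) = 0)
    (x : ℕ → (Fin n → ℝ))
    (hx0 : x 0 ∈ LinearMap.range C.mulVecLin)
    (hrec : ∀ (k : ℕ) (hk : k < q),
        x (k + 1) = x k +
          (((b - S.mulVec (x k)) ⬝ᵥ p ⟨k, hk⟩) /
            (p ⟨k, hk⟩ ⬝ᵥ S.mulVec (p ⟨k, hk⟩))) • p ⟨k, hk⟩) :
    ∀ (k : ℕ), 1 ≤ k → k ≤ q →
      (x k - x 0 ∈ Submodule.span ℝ (p '' {i : Fin q | (i : ℕ) < k})) ∧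
      (∀ z : Fin n → ℝ, z - x 0 ∈ Submodule.span ℝ (p '' {i : Fin q | (i : ℕ) < k}) →
          z ∈ LinearMap.range C.mulVecLin) ∧
      (∀ z : Fin n → ℝ, z - x 0 ∈ Submodule.span ℝ (p '' {i : Fin q | (i : ℕ) < k}) →
          (1 / 2 : ℝ) * (x k ⬝ᵥ S.mulVec (x k)) - b ⬝ᵥ x k ≤
            (1 / 2 : ℝ) * (z ⬝ᵥ S.mulVec z) - b ⬝ᵥ z) := by
  have hsym : ∀ u v : Fin n → ℝ, u ⬝ᵥ S.mulVec v = v ⬝ᵥ S.mulVec u := by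
    intro u v
    have hT : Sᵀ = S := by
      have h := hS.isHermitian.eq
      rwa [Matrix.conjTranspose_eq_transpose_of_trivial] at h
    rw [dotProduct_comm, ← Matrix.vecMul_transpose, hT, Matrix.dotProduct_mulVec]
  have hpos : ∀ u : Fin n → ℝ, u ≠ 0 → 0 < u ⬝ᵥ S.mulVec u := by
    intro u hu
    have h := hS.dotProduct_mulVec_pos hu
    simpa using h
  have hnn : ∀ u : Fin n → ℝ, 0 ≤ u ⬝ᵥ S.mulVec u := by
    intro u
    by_cases hu : u = 0
    · simp [hu]
    · exact (hpos u hu).le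
  have key : ∀ k : ℕ, k ≤ q →
      (x k - x 0 ∈ Submodule.span ℝ (p '' {i : Fin q | (i : ℕ) < k})) ∧
      ∀ i : Fin q, (i : ℕ) < k → (b - S.mulVec (x k)) ⬝ᵥ p i = 0 := by
    intro k
    induction k with
    | zero => intro _; simp
    | succ k ih =>
      intro hk
      have hk' : k < q := hk
      obtain ⟨h1, h2⟩ := ih hk'.le
      have hr := hrec k hk'
      constructor
      · rw [hr, add_sub_right_comm]
        refine Submodule.add_mem _ ?_ (Submodule.smul_mem _ _ (Submodule.subset_span ?_))
        · refine Submodule.span_mono (Set.image_mono ?_) h1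
          intro i hi
          exact Nat.lt_succ_of_lt hi
        · exact ⟨⟨k, hk'⟩, Nat.lt_succ_self k, rfl⟩
      · intro i hi
        have e : ∀ a : ℝ, (b - S.mulVec (x k + a • p ⟨k, hk'⟩)) ⬝ᵥ p i =
            (b - S.mulVec (x k)) ⬝ᵥ p i - a * (p i ⬝ᵥ S.mulVec (p ⟨k, hk'⟩)) := by
          intro a
          rw [Matrix.mulVec_add, Matrix.mulVec_smul, ← sub_sub, sub_dotProduct,
            smul_dotProduct, smul_eq_mul, dotProduct_comm (S.mulVec (p ⟨k, hk'⟩))]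
        rw [hr, e]
        by_cases hik : i = ⟨k, hk'⟩
        · subst hik
          rw [div_mul_cancel₀ _ (hpos _ (hpnz _)).ne', sub_self]
        · have hlt : (i : ℕ) < k := by
            have : (i : ℕ) ≠ k := fun h => hik (Fin.ext h)
            omega
          rw [h2 i hlt, hconj i _ hik]
          simp
  intro k _ hk
  obtain ⟨h1, h2⟩ := key k hk
  refine ⟨h1, ?_, ?_⟩
  · intro z hz
    have hle : Submodule.span ℝ (p '' {i : Fin q | (i : ℕ) < k}) ≤
        LinearMap.range C.mulVecLin := by
      rw [Submodule.span_le]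
      rintro _ ⟨i, _, rfl⟩
      exact hpR i
    have h := Submodule.add_mem _ (hle hz) hx0
    rwa [sub_add_cancel] at h
  · intro z hz
    have hd : z - x k ∈ Submodule.span ℝ (p '' {i : Fin q | (i : ℕ) < k}) := by
      have h := Submodule.sub_mem _ hz h1
      rwa [sub_sub_sub_cancel_right] at h
    have horth : ∀ d ∈ Submodule.span ℝ (p '' {i : Fin q | (i : ℕ) < k}),
        (b - S.mulVec (x k)) ⬝ᵥ d = 0 := by
      intro d hd
      induction hd using Submodule.span_induction with
      | mem y hy =>
        obtain ⟨i, hi, rfl⟩ := hy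
        exact h2 i hi
      | zero => simp
      | add y w _ _ hy hw => rw [dotProduct_add, hy, hw, add_zero]
      | smul a y _ hy => rw [dotProduct_smul, hy, smul_zero]
    have ho := horth _ hd
    obtain ⟨d, rfl⟩ : ∃ d, z = x k + d := ⟨z - x k, by abel⟩
    rw [add_sub_cancel_left, sub_dotProduct, dotProduct_comm (S.mulVec (x k))] at ho
    have hs := hsym (x k) d
    have hdd := hnn d
    rw [Matrix.mulVec_add, add_dotProduct, dotProduct_add, dotProduct_add, dotProduct_add]
    linarith
end

section
/- (Krylov subspace characterization of the ReK method.) For every k = 0, 1, …, q−1 for which the ReK directions p₀, …, p_k are nonzero, the three subspaces coincide: K_C(r₀; k) = span{Π_C r₀, Π_C r₁, …, Π_C r_k} = span{p₀, p₁, …, p_k}. -/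
open Matrix

/-- Span of the first `k + 1` terms of a sequence. -/
def ReKSpan {V : Type*} [AddCommGroup V] [Module ℝ V] (f : ℕ → V) (k : ℕ) : Submodule ℝ V :=
  Submodule.span ℝ (Set.range fun i : Fin (k + 1) => f i)

section
variable {V : Type*} [AddCommGroup V] [Module ℝ V]

lemma ReKSpan_mem (f : ℕ → V) {i k : ℕ} (h : i ≤ k) : f i ∈ ReKSpan f k :=
  Submodule.subset_span ⟨⟨i, by omega⟩, rfl⟩

lemma ReKSpan_le (f : ℕ → V) (k : ℕ) (W : Submodule ℝ V) (h : ∀ i, i ≤ k → f i ∈ W) :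
    ReKSpan f k ≤ W := by
  refine Submodule.span_le.2 ?_
  rintro _ ⟨i, rfl⟩
  exact h i (by omega)

lemma ReKSpan_mono (f : ℕ → V) {i k : ℕ} (h : i ≤ k) : ReKSpan f i ≤ ReKSpan f k :=
  ReKSpan_le f i _ fun _ hj => ReKSpan_mem f (hj.trans h)

lemma ReKSpan_le_of (f g : ℕ → V) (k : ℕ) (h : ∀ i, i ≤ k → f i ∈ ReKSpan g i) :
    ReKSpan f k ≤ ReKSpan g k :=
  ReKSpan_le f k _ fun i hi => ReKSpan_mono g hi (h i hi)

lemma ReKSpan_main (A : V →ₗ[ℝ] V) (K g p : ℕ → V) (α β : ℕ → ℝ)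
    (hK0 : K 0 = g 0) (hK : ∀ k, K (k + 1) = A (K k)) (hp0 : p 0 = g 0)
    (hp : ∀ k, p (k + 1) = g (k + 1) + β k • p k)
    (hg : ∀ k, g (k + 1) = g k - α k • A (p k))
    (k : ℕ) (hα : ∀ i, i ≤ k → α i ≠ 0) :
    ReKSpan K k = ReKSpan g k ∧ ReKSpan g k = ReKSpan p k := by
  have h1 : ∀ i, p i ∈ ReKSpan g i := by
    intro i
    induction i with
    | zero => rw [hp0]; exact ReKSpan_mem g le_rfl
    | succ i ih =>
      rw [hp]
      exact add_mem (ReKSpan_mem g le_rfl)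
        (Submodule.smul_mem _ _ (ReKSpan_mono g (Nat.le_succ i) ih))
  have h2 : ∀ i, g i ∈ ReKSpan p i := by
    intro i
    cases i with
    | zero => rw [← hp0]; exact ReKSpan_mem p le_rfl
    | succ i =>
      rw [eq_sub_of_add_eq (hp i).symm]
      exact sub_mem (ReKSpan_mem p le_rfl)
        (Submodule.smul_mem _ _ (ReKSpan_mem p (Nat.le_succ i)))
  have hgp : ReKSpan g k = ReKSpan p k :=
    le_antisymm (ReKSpan_le_of _ _ _ fun i _ => h2 i) (ReKSpan_le_of _ _ _ fun i _ => h1 i)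
  have hAK : ∀ i, ReKSpan K i ≤ (ReKSpan K (i + 1)).comap A := by
    intro i
    refine ReKSpan_le _ _ _ fun j hj => ?_
    rw [Submodule.mem_comap, ← hK]
    exact ReKSpan_mem K (by omega)
  have h3 : ∀ i, g i ∈ ReKSpan K i ∧ p i ∈ ReKSpan K i := by
    intro i
    induction i with
    | zero => rw [hp0, ← hK0]; exact ⟨ReKSpan_mem K le_rfl, ReKSpan_mem K le_rfl⟩
    | succ i ih =>
      have hgi : g (i + 1) ∈ ReKSpan K (i + 1) := by
        rw [hg]
        exact sub_mem (ReKSpan_mono K (Nat.le_succ i) ih.1)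
          (Submodule.smul_mem _ _ (hAK i ih.2))
      refine ⟨hgi, ?_⟩
      rw [hp]
      exact add_mem hgi (Submodule.smul_mem _ _ (ReKSpan_mono K (Nat.le_succ i) ih.2))
  have hAp : ∀ i, i ≤ k → ReKSpan p i ≤ (ReKSpan p (i + 1)).comap A := by
    intro i hi
    refine ReKSpan_le _ _ _ fun j hj => ?_
    have hj0 := hα j (hj.trans hi)
    have e : A (p j) = (α j)⁻¹ • (g j - g (j + 1)) := by
      rw [hg, sub_sub_cancel, smul_smul, inv_mul_cancel₀ hj0, one_smul]
    rw [Submodule.mem_comap, e]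
    exact Submodule.smul_mem _ _ (sub_mem (ReKSpan_mono p (by omega) (h2 j))
      (ReKSpan_mono p (by omega) (h2 (j + 1))))
  have h4 : ∀ i, i ≤ k → K i ∈ ReKSpan p i := by
    intro i
    induction i with
    | zero => intro _; rw [hK0]; exact h2 0
    | succ i ih => intro hi; rw [hK]; exact hAp i (by omega) (ih (by omega))
  refine ⟨le_antisymm ?_ (ReKSpan_le_of _ _ _ fun i _ => (h3 i).1), hgp⟩
  rw [hgp]
  exact ReKSpan_le_of _ _ _ h4

end

/-- Krylov subspace characterization of the ReK method: for every `k < q` such that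
the ReK directions `p₀, …, p_k` are nonzero, the restricted Krylov subspace
`K_C(r₀; k)`, the span of the projected residuals `Π_C r₀, …, Π_C r_k`, and the span of
the directions `p₀, …, p_k` all coincide. -/
theorem rek_krylov_subspace_characterization
    (n m : ℕ) (hn : 0 < n) (hm : 0 < m)
    (S : Matrix (Fin n) (Fin n) ℝ) (hS : S.PosDef)
    (C : Matrix (Fin n) (Fin m) ℝ) (b : Fin n → ℝ)
    (q : ℕ) (hq : q = C.rank)
    (Pr : Matrix (Fin n) (Fin n) ℝ)
    (hPrSym : Prᵀ = Pr) (hPrIdem : Pr * Pr = Pr)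
    (hPrRange : LinearMap.range Pr.mulVecLin = LinearMap.range C.mulVecLin)
    (x p r : ℕ → (Fin n → ℝ))
    (hr : ∀ k, r k = b - S.mulVec (x k))
    (hx0 : x 0 ∈ LinearMap.range C.mulVecLin)
    (hp0 : p 0 = Pr.mulVec (r 0))
    (hprec : ∀ k : ℕ, p (k + 1) = Pr.mulVec (r (k + 1)) +
        (-(r (k + 1) ⬝ᵥ Pr.mulVec (S.mulVec (p k))) / (p k ⬝ᵥ S.mulVec (p k))) • p k)
    (hxrec : ∀ k : ℕ, x (k + 1) = x k +
        ((r k ⬝ᵥ p k) / (p k ⬝ᵥ S.mulVec (p k))) • p k) :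
    ∀ k : ℕ, k < q → (∀ i, i ≤ k → p i ≠ 0) →
      (Submodule.span ℝ (Set.range fun j : Fin (k + 1) =>
            ((Pr * S) ^ (j : ℕ)).mulVec (Pr.mulVec (r 0))) =
          Submodule.span ℝ (Set.range fun i : Fin (k + 1) => Pr.mulVec (r i)) ∧
        Submodule.span ℝ (Set.range fun i : Fin (k + 1) => Pr.mulVec (r i)) =
          Submodule.span ℝ (Set.range fun i : Fin (k + 1) => p i)) := by
  intro k _ hne
  have hpos : ∀ v : Fin n → ℝ, v ≠ 0 → v ⬝ᵥ S.mulVec v ≠ 0 := by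
    intro v hv
    have := hS.dotProduct_mulVec_pos hv
    rw [star_trivial] at this
    exact this.ne'
  have hPrd : ∀ u v : Fin n → ℝ, u ⬝ᵥ Pr.mulVec v = Pr.mulVec u ⬝ᵥ v := by
    intro u v
    rw [dotProduct_mulVec, ← mulVec_transpose, hPrSym]
  have hrrec : ∀ i, r (i + 1) = r i -
      ((r i ⬝ᵥ p i) / (p i ⬝ᵥ S.mulVec (p i))) • S.mulVec (p i) := by
    intro i
    rw [hr (i + 1), hxrec, mulVec_add, mulVec_smul, ← sub_sub, ← hr i]
  have horth : ∀ i, p i ≠ 0 → r (i + 1) ⬝ᵥ p i = 0 := by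
    intro i hi
    rw [hrrec, sub_dotProduct, smul_dotProduct, smul_eq_mul, dotProduct_comm (S.mulVec (p i)),
      div_mul_cancel₀ _ (hpos _ hi), sub_self]
  have hgne : ∀ i, i ≤ k → Pr.mulVec (r i) ≠ 0 := by
    intro i hi h0
    apply hne i hi
    cases i with
    | zero => rw [hp0, h0]
    | succ i => rw [hprec, hPrd, h0]; simp
  have hrp : ∀ i, i ≤ k → r i ⬝ᵥ p i = Pr.mulVec (r i) ⬝ᵥ Pr.mulVec (r i) := by
    intro i hi
    have hg : r i ⬝ᵥ Pr.mulVec (r i) = Pr.mulVec (r i) ⬝ᵥ Pr.mulVec (r i) := by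
      rw [hPrd (Pr.mulVec (r i)), mulVec_mulVec, hPrIdem, hPrd]
    cases i with
    | zero => rw [hp0, hg]
    | succ i =>
      rw [hprec, dotProduct_add, dotProduct_smul, horth i (hne i (by omega)), hg]
      simp
  refine ReKSpan_main (Pr * S).mulVecLin (fun j => ((Pr * S) ^ j).mulVec (Pr.mulVec (r 0)))
    (fun i => Pr.mulVec (r i)) p (fun i => (r i ⬝ᵥ p i) / (p i ⬝ᵥ S.mulVec (p i)))
    (fun k => -(r (k + 1) ⬝ᵥ Pr.mulVec (S.mulVec (p k))) / (p k ⬝ᵥ S.mulVec (p k)))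
    ?_ ?_ hp0 hprec ?_ k ?_
  · simp
  · intro j
    simp only [mulVecLin_apply]
    rw [mulVec_mulVec (Pr.mulVec (r 0)), ← pow_succ']
  · intro j
    simp only [mulVecLin_apply]
    rw [hrrec, mulVec_sub, mulVec_smul, mulVec_mulVec]
  · intro i hi
    refine div_ne_zero ?_ (hpos _ (hne i hi))
    rw [hrp i hi]
    exact fun h => hgne i hi (dotProduct_self_eq_zero.1 h)
end

section
/- (Conjugacy of the ReK directions.) If the ReK directions p₀, p₁, …, p_{q−1} are all nonzero, then they form a set of restricted conjugate directions: each p_k lies in R(C), and p_kᵀ S p_i = 0 for all 0 ≤ i ≠ k ≤ q−1. -/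
open Matrix

/-- Conjugacy of the ReK directions: if the ReK directions `p₀, …, p_{q−1}` are all
nonzero, then they form a set of restricted conjugate directions: each `p_k` lies in
`R(C)`, and `p_kᵀ S p_i = 0` for all `0 ≤ i ≠ k ≤ q − 1`. -/
theorem rek_directions_conjugate
    (n m : ℕ) (hn : 0 < n) (hm : 0 < m)
    (S : Matrix (Fin n) (Fin n) ℝ) (hS : S.PosDef)
    (C : Matrix (Fin n) (Fin m) ℝ) (b : Fin n → ℝ)
    (q : ℕ) (hq : q = C.rank)
    (Pr : Matrix (Fin n) (Fin n) ℝ)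
    (hPrSym : Prᵀ = Pr) (hPrIdem : Pr * Pr = Pr)
    (hPrRange : LinearMap.range Pr.mulVecLin = LinearMap.range C.mulVecLin)
    (x p r : ℕ → (Fin n → ℝ))
    (hr : ∀ k, r k = b - S.mulVec (x k))
    (hx0 : x 0 ∈ LinearMap.range C.mulVecLin)
    (hp0 : p 0 = Pr.mulVec (r 0))
    (hprec : ∀ k : ℕ, p (k + 1) = Pr.mulVec (r (k + 1)) +
        (-(r (k + 1) ⬝ᵥ Pr.mulVec (S.mulVec (p k))) / (p k ⬝ᵥ S.mulVec (p k))) • p k)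
    (hxrec : ∀ k : ℕ, x (k + 1) = x k +
        ((r k ⬝ᵥ p k) / (p k ⬝ᵥ S.mulVec (p k))) • p k)
    (hpnz : ∀ k, k < q → p k ≠ 0) :
    (∀ k, k < q → p k ∈ LinearMap.range C.mulVecLin) ∧
      (∀ i k, i < q → k < q → i ≠ k → p k ⬝ᵥ S.mulVec (p i) = 0) := by
  have symm_dot : ∀ (A : Matrix (Fin n) (Fin n) ℝ), Aᵀ = A →
      ∀ u v : Fin n → ℝ, (A.mulVec u) ⬝ᵥ v = u ⬝ᵥ A.mulVec v := by
    intro A hA u v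
    rw [Matrix.dotProduct_mulVec, ← Matrix.mulVec_transpose, hA]
  have hST : Sᵀ = S := by
    have := hS.isHermitian.eq
    simpa [Matrix.conjTranspose_eq_transpose_of_trivial] using this
  have hSs : ∀ u v : Fin n → ℝ, u ⬝ᵥ S.mulVec v = v ⬝ᵥ S.mulVec u := by
    intro u v
    rw [← symm_dot S hST, dotProduct_comm]
  have hPs := symm_dot Pr hPrSym
  have hpos : ∀ k, k < q → p k ⬝ᵥ S.mulVec (p k) ≠ 0 := by
    intro k hk
    have := hS.dotProduct_mulVec_pos (hpnz k hk)
    simp only [star_trivial] at this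
    exact this.ne'
  have hPP : ∀ v, Pr.mulVec (Pr.mulVec v) = Pr.mulVec v := by
    intro v
    rw [Matrix.mulVec_mulVec, hPrIdem]
  have hfix : ∀ k, Pr.mulVec (p k) = p k := by
    intro k
    induction k with
    | zero => rw [hp0, hPP]
    | succ k ih => rw [hprec, Matrix.mulVec_add, Matrix.mulVec_smul, hPP, ih]
  have hrrec : ∀ k, r (k + 1) = r k -
      ((r k ⬝ᵥ p k) / (p k ⬝ᵥ S.mulVec (p k))) • S.mulVec (p k) := by
    intro k
    rw [hr (k + 1), hxrec, Matrix.mulVec_add, Matrix.mulVec_smul, hr k]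
    abel
  -- projected residuals lie in the span of the directions
  have hg : ∀ (w : Fin n → ℝ) (k : ℕ), (∀ i, i ≤ k → w ⬝ᵥ p i = 0) →
      w ⬝ᵥ Pr.mulVec (r k) = 0 := by
    intro w k hw
    cases k with
    | zero => rw [← hp0]; exact hw 0 le_rfl
    | succ k =>
      have h1 := hw (k + 1) le_rfl
      rw [hprec, dotProduct_add, dotProduct_smul, hw k (by omega)] at h1
      simpa using h1
  -- nonvanishing of the step length numerators
  have hnum : ∀ k, k < q → (∀ i, i < k → r k ⬝ᵥ p i = 0) → r k ⬝ᵥ p k ≠ 0 := by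
    intro k hk hrk h0
    have h1 : r k ⬝ᵥ Pr.mulVec (r k) = 0 := by
      apply hg
      intro i hi
      rcases hi.lt_or_eq with h | h
      · exact hrk i h
      · rw [h]; exact h0
    have h2 : Pr.mulVec (r k) = 0 := by
      rw [← dotProduct_self_eq_zero, hPs, hPP]
      exact h1
    apply hpnz k hk
    cases k with
    | zero => rw [hp0, h2]
    | succ k => rw [hprec, ← hPs, h2]; simp
  have main : ∀ k, k < q → (∀ i, i < k → r k ⬝ᵥ p i = 0) ∧
      (∀ i, i < k → p k ⬝ᵥ S.mulVec (p i) = 0) := by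
    intro k
    induction k using Nat.strong_induction_on with
    | _ k IH =>
      intro hk
      cases k with
      | zero => exact ⟨fun i hi => absurd hi (by omega), fun i hi => absurd hi (by omega)⟩
      | succ k =>
        obtain ⟨hrk, hpk⟩ := IH k (by omega) (by omega)
        have hk0 := hpos k (by omega)
        have hR : ∀ i, i < k + 1 → r (k + 1) ⬝ᵥ p i = 0 := by
          intro i hi
          rw [hrrec, sub_dotProduct, smul_dotProduct, symm_dot S hST, smul_eq_mul]
          rcases (Nat.lt_succ_iff.mp hi).lt_or_eq with h | h
          · rw [hrk i h, hpk i h]; simp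
          · subst h
            field_simp
            ring
        refine ⟨hR, ?_⟩
        intro i hi
        rw [hprec, add_dotProduct, smul_dotProduct, smul_eq_mul, hPs]
        rcases (Nat.lt_succ_iff.mp hi).lt_or_eq with h | h
        · rw [hpk i h, mul_zero, add_zero]
          have hi0 := hpos i (by omega)
          have hni := hnum i (by omega) (IH i (by omega) (by omega)).1
          have e1 : r (k + 1) ⬝ᵥ Pr.mulVec (r i) = 0 :=
            hg _ _ fun j hj => hR j (by omega)
          have e2 : r (k + 1) ⬝ᵥ Pr.mulVec (r (i + 1)) = 0 :=
            hg _ _ fun j hj => hR j (by omega)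
          rw [hrrec i, Matrix.mulVec_sub, Matrix.mulVec_smul, dotProduct_sub, dotProduct_smul,
            e1, zero_sub, neg_eq_zero, smul_eq_mul] at e2
          exact (mul_eq_zero.mp e2).resolve_left (div_ne_zero hni hi0)
        · subst h
          field_simp
          ring
  refine ⟨?_, ?_⟩
  · intro k _
    rw [← hPrRange]
    exact ⟨p k, hfix k⟩
  · intro i k hi hk hik
    rcases lt_or_gt_of_ne hik with h | h
    · exact (main k hk).2 i h
    · rw [hSs]; exact (main i hi).2 k h
end

section
/- (Orthogonality of projected residuals of the ReK method.) If the ReK directions p₀, p₁, …, p_{q−1} are all nonzero, then for every k = 1, 2, …, q and every i = 0, 1, …, k−1 the residuals satisfy r_kᵀ Π_C r_i = 0. -/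
open Matrix

/-- Orthogonality of the projected residuals of the ReK method: if the ReK directions
`p₀, …, p_{q−1}` are all nonzero, then for every `k = 1, …, q` and every
`i = 0, …, k−1` the residuals satisfy `r_kᵀ Π_C r_i = 0`. -/
theorem rek_projected_residuals_orthogonal
    (n m : ℕ) (hn : 0 < n) (hm : 0 < m)
    (S : Matrix (Fin n) (Fin n) ℝ) (hS : S.PosDef)
    (C : Matrix (Fin n) (Fin m) ℝ) (b : Fin n → ℝ)
    (q : ℕ) (hq : q = C.rank)
    (Pr : Matrix (Fin n) (Fin n) ℝ)
    (hPrSym : Prᵀ = Pr) (hPrIdem : Pr * Pr = Pr)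
    (hPrRange : LinearMap.range Pr.mulVecLin = LinearMap.range C.mulVecLin)
    (x p r : ℕ → (Fin n → ℝ))
    (hr : ∀ k, r k = b - S.mulVec (x k))
    (hx0 : x 0 ∈ LinearMap.range C.mulVecLin)
    (hp0 : p 0 = Pr.mulVec (r 0))
    (hprec : ∀ k : ℕ, p (k + 1) = Pr.mulVec (r (k + 1)) +
        (-(r (k + 1) ⬝ᵥ Pr.mulVec (S.mulVec (p k))) / (p k ⬝ᵥ S.mulVec (p k))) • p k)
    (hxrec : ∀ k : ℕ, x (k + 1) = x k +
        ((r k ⬝ᵥ p k) / (p k ⬝ᵥ S.mulVec (p k))) • p k)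
    (hpnz : ∀ k, k < q → p k ≠ 0) :
    ∀ k : ℕ, 1 ≤ k → k ≤ q → ∀ i : ℕ, i < k → r k ⬝ᵥ Pr.mulVec (r i) = 0 := by
  have hSs : ∀ u v : Fin n → ℝ, u ⬝ᵥ S.mulVec v = v ⬝ᵥ S.mulVec u := by
    intro u v
    have h : Sᵀ = S := by
      have := hS.1
      rwa [Matrix.IsHermitian, Matrix.conjTranspose_eq_transpose_of_trivial] at this
    rw [Matrix.dotProduct_mulVec, ← Matrix.mulVec_transpose, h, dotProduct_comm]
  have hPs : ∀ u v : Fin n → ℝ, u ⬝ᵥ Pr.mulVec v = v ⬝ᵥ Pr.mulVec u := by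
    intro u v
    rw [Matrix.dotProduct_mulVec, ← Matrix.mulVec_transpose, hPrSym, dotProduct_comm]
  have hPP : ∀ v : Fin n → ℝ, Pr.mulVec (Pr.mulVec v) = Pr.mulVec v := by
    intro v
    rw [Matrix.mulVec_mulVec, hPrIdem]
  have hd : ∀ k, k < q → p k ⬝ᵥ S.mulVec (p k) ≠ 0 := by
    intro k hk
    have := hS.dotProduct_mulVec_pos (hpnz k hk)
    simp only [star_trivial] at this
    exact this.ne'
  have hrr : ∀ k, r (k + 1) = r k - ((r k ⬝ᵥ p k) / (p k ⬝ᵥ S.mulVec (p k))) • S.mulVec (p k) := by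
    intro k
    rw [hr (k + 1), hxrec k, Matrix.mulVec_add, Matrix.mulVec_smul, ← sub_sub, ← hr k]
  -- orthogonality to directions gives orthogonality to projected residuals
  have hA : ∀ (v : Fin n → ℝ) (k : ℕ), (∀ i, i < k → v ⬝ᵥ p i = 0) →
      ∀ i, i < k → v ⬝ᵥ Pr.mulVec (r i) = 0 := by
    intro v k h i hi
    cases i with
    | zero => rw [← hp0]; exact h 0 hi
    | succ j =>
      have h1 := h (j + 1) hi
      rw [hprec j, dotProduct_add, dotProduct_smul, h j (by omega)] at h1
      simpa using h1
  have hmain : ∀ k, k ≤ q → (∀ i, i < k → r k ⬝ᵥ p i = 0) ∧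
      (∀ i, i < k → p k ⬝ᵥ S.mulVec (p i) = 0) := by
    intro k
    induction k using Nat.strong_induction_on with
    | _ k ih =>
    cases k with
    | zero => intro _; exact ⟨fun i hi => by omega, fun i hi => by omega⟩
    | succ k =>
      intro hk
      obtain ⟨ihA, ihB⟩ := ih k (by omega) (by omega)
      have hA1 : ∀ i, i < k + 1 → r (k + 1) ⬝ᵥ p i = 0 := by
        intro i hi
        rw [hrr k, sub_dotProduct, smul_dotProduct, dotProduct_comm (S.mulVec (p k)), smul_eq_mul]
        rcases Nat.lt_succ_iff_lt_or_eq.mp hi with h | h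
        · rw [ihA i h, hSs (p i) (p k), ihB i h]; simp
        · subst h
          rw [div_mul_cancel₀ _ (hd i (by omega)), sub_self]
      refine ⟨hA1, ?_⟩
      intro i hi
      have hsw : Pr.mulVec (r (k + 1)) ⬝ᵥ S.mulVec (p i)
          = r (k + 1) ⬝ᵥ Pr.mulVec (S.mulVec (p i)) := by
        rw [dotProduct_comm, hPs]
      rw [hprec k, add_dotProduct, smul_dotProduct, smul_eq_mul, hsw]
      rcases Nat.lt_succ_iff_lt_or_eq.mp hi with h | h
      · rw [ihB i h, mul_zero, add_zero]
        have hne : r i ⬝ᵥ p i ≠ 0 := by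
          intro h0
          have hz : Pr.mulVec (r i) = 0 := by
            have h2 : r i ⬝ᵥ Pr.mulVec (r i) = 0 := by
              cases i with
              | zero => rwa [← hp0]
              | succ j =>
                have h3 := (ih (j + 1) (by omega) (by omega)).1 j (by omega)
                rw [hprec j, dotProduct_add, dotProduct_smul, h3] at h0
                simpa using h0
            rw [← hPP, hPs, dotProduct_comm, dotProduct_comm] at h2
            first
              | exact dotProduct_self_eq_zero.mp h2
              | exact dotProduct_self_eq_zero.mp (by rw [← h2, dotProduct_comm])
          apply hpnz i (by omega)
          cases i with
          | zero => rw [hp0, hz]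
          | succ j =>
            rw [hprec j, hPs, hz]
            simp
        have h1 := hA _ _ hA1 i hi
        have h2 := hA _ _ hA1 (i + 1) (by omega)
        rw [hrr i, Matrix.mulVec_sub, dotProduct_sub, h1, Matrix.mulVec_smul, dotProduct_smul,
          smul_eq_mul, zero_sub, neg_eq_zero] at h2
        exact (mul_eq_zero.mp h2).resolve_left (div_ne_zero hne (hd i (by omega)))
      · subst h
        rw [div_mul_cancel₀ _ (hd i (by omega)), add_neg_cancel]
  intro k _ hk i hi
  exact hA (r k) k (hmain k hk).1 i hi
end

section
/- (Simplified coefficient formulas for the ReK method.) If the ReK directions p₀, p₁, …, p_{q−1} are all nonzero, then the coefficients of the ReK iteration satisfy α_k = (r_kᵀ Π_C r_k)/(p_kᵀ S p_k) for k = 0, 1, …, q−1, and β_{k+1} = (r_{k+1}ᵀ Π_C r_{k+1})/(r_kᵀ Π_C r_k) for k = 0, 1, …, q−2. -/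
open Matrix

/-- Simplified coefficient formulas for the ReK method: if the ReK directions
`p₀, …, p_{q−1}` are all nonzero, then
`α_k = (r_kᵀ Π_C r_k)/(p_kᵀ S p_k)` for `k = 0, …, q−1`, and
`β_{k+1} = (r_{k+1}ᵀ Π_C r_{k+1})/(r_kᵀ Π_C r_k)` for `k = 0, …, q−2`,
where `α_k = (r_kᵀ p_k)/(p_kᵀ S p_k)` and
`β_{k+1} = −(r_{k+1}ᵀ Π_C S p_k)/(p_kᵀ S p_k)`. -/
theorem rek_coefficient_formulas
    (n m : ℕ) (hn : 0 < n) (hm : 0 < m)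
    (S : Matrix (Fin n) (Fin n) ℝ) (hS : S.PosDef)
    (C : Matrix (Fin n) (Fin m) ℝ) (b : Fin n → ℝ)
    (q : ℕ) (hq : q = C.rank)
    (Pr : Matrix (Fin n) (Fin n) ℝ)
    (hPrSym : Prᵀ = Pr) (hPrIdem : Pr * Pr = Pr)
    (hPrRange : LinearMap.range Pr.mulVecLin = LinearMap.range C.mulVecLin)
    (x p r : ℕ → (Fin n → ℝ))
    (hr : ∀ k, r k = b - S.mulVec (x k))
    (hx0 : x 0 ∈ LinearMap.range C.mulVecLin)
    (hp0 : p 0 = Pr.mulVec (r 0))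
    (hprec : ∀ k : ℕ, p (k + 1) = Pr.mulVec (r (k + 1)) +
        (-(r (k + 1) ⬝ᵥ Pr.mulVec (S.mulVec (p k))) / (p k ⬝ᵥ S.mulVec (p k))) • p k)
    (hxrec : ∀ k : ℕ, x (k + 1) = x k +
        ((r k ⬝ᵥ p k) / (p k ⬝ᵥ S.mulVec (p k))) • p k)
    (hpnz : ∀ k, k < q → p k ≠ 0) :
    (∀ k : ℕ, k < q →
        (r k ⬝ᵥ p k) / (p k ⬝ᵥ S.mulVec (p k)) =
          (r k ⬝ᵥ Pr.mulVec (r k)) / (p k ⬝ᵥ S.mulVec (p k))) ∧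
      (∀ k : ℕ, k + 1 < q →
        -(r (k + 1) ⬝ᵥ Pr.mulVec (S.mulVec (p k))) / (p k ⬝ᵥ S.mulVec (p k)) =
          (r (k + 1) ⬝ᵥ Pr.mulVec (r (k + 1))) / (r k ⬝ᵥ Pr.mulVec (r k))) := by
  have hrr : ∀ k, r (k + 1) = r k -
      ((r k ⬝ᵥ p k) / (p k ⬝ᵥ S.mulVec (p k))) • S.mulVec (p k) := by
    intro k
    rw [hr (k + 1), hxrec k, Matrix.mulVec_add, Matrix.mulVec_smul]
    generalize ((r k ⬝ᵥ p k) / (p k ⬝ᵥ S.mulVec (p k))) = a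
    rw [hr k]
    abel
  have hsymS : Sᵀ = S := by
    have := hS.isHermitian.eq
    rwa [Matrix.conjTranspose_eq_transpose_of_trivial] at this
  have symm_aux : ∀ (A : Matrix (Fin n) (Fin n) ℝ), Aᵀ = A →
      ∀ u v : Fin n → ℝ, u ⬝ᵥ A.mulVec v = v ⬝ᵥ A.mulVec u := by
    intro A hA u v
    rw [Matrix.dotProduct_mulVec, ← Matrix.mulVec_transpose, hA, dotProduct_comm]
  have hSs := symm_aux S hsymS
  have hPs := symm_aux Pr hPrSym
  have hPP : ∀ v, Pr.mulVec (Pr.mulVec v) = Pr.mulVec v := by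
    intro v
    rw [Matrix.mulVec_mulVec, hPrIdem]
  have hpos : ∀ v : Fin n → ℝ, v ≠ 0 → 0 < v ⬝ᵥ S.mulVec v := by
    intro v hv
    have := hS.dotProduct_mulVec_pos hv
    simpa using this
  have hPd : ∀ u v : Fin n → ℝ, Pr.mulVec u ⬝ᵥ v = u ⬝ᵥ Pr.mulVec v := by
    intro u v
    rw [dotProduct_comm, hPs]
  -- (a) the new residual is orthogonal to the last direction
  have ha : ∀ k, r (k + 1) ⬝ᵥ p k = 0 := by
    intro k
    by_cases h : p k = 0
    · simp [h]
    · have h1 := (hpos _ h).ne'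
      rw [hrr k, sub_dotProduct, smul_dotProduct, dotProduct_comm (S.mulVec (p k)),
        smul_eq_mul, div_mul_cancel₀ _ h1, sub_self]
  have hb : ∀ k, r k ⬝ᵥ p k = r k ⬝ᵥ Pr.mulVec (r k) := by
    intro k
    cases k with
    | zero => rw [hp0]
    | succ k => rw [hprec k, dotProduct_add, dotProduct_smul, ha k]; simp
  -- (c) consecutive directions are conjugate
  have hc : ∀ k, p (k + 1) ⬝ᵥ S.mulVec (p k) = 0 := by
    intro k
    by_cases h : p k = 0
    · simp [h]
    · have h1 := (hpos _ h).ne'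
      rw [hprec k, add_dotProduct, smul_dotProduct, smul_eq_mul, div_mul_cancel₀ _ h1, hPd]
      ring
  have hd : ∀ k, r (k + 1) ⬝ᵥ Pr.mulVec (r k) = 0 := by
    intro k
    cases k with
    | zero => rw [← hp0]; exact ha 0
    | succ k =>
      have h2 : r (k + 1 + 1) ⬝ᵥ p k = 0 := by
        rw [hrr (k + 1), sub_dotProduct, smul_dotProduct, dotProduct_comm (S.mulVec _), hSs (p k),
          hc k, ha k]
        simp
      have h3 := ha (k + 1)
      rw [hprec k, dotProduct_add, dotProduct_smul, h2] at h3
      simpa using h3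
  have he : ∀ k, p k ≠ 0 → r k ⬝ᵥ Pr.mulVec (r k) ≠ 0 := by
    intro k hk h0
    have hg : Pr.mulVec (r k) = 0 := by
      rw [← hPP, ← hPd] at h0
      exact dotProduct_self_eq_zero.mp h0
    apply hk
    cases k with
    | zero => rw [hp0, hg]
    | succ k =>
      rw [hprec k, hg, ← hPd, hg]
      simp
  refine ⟨fun k _ => by rw [hb k], fun k hk => ?_⟩
  have hk0 := hpnz k (by omega)
  have hD := (hpos _ hk0).ne'
  have hN := he k hk0
  have hG : r (k + 1) ⬝ᵥ Pr.mulVec (r (k + 1)) =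
      -((r k ⬝ᵥ Pr.mulVec (r k)) / (p k ⬝ᵥ S.mulVec (p k)) *
        (r (k + 1) ⬝ᵥ Pr.mulVec (S.mulVec (p k)))) := by
    have h : Pr.mulVec (r (k + 1)) = Pr.mulVec (r k) -
        ((r k ⬝ᵥ p k) / (p k ⬝ᵥ S.mulVec (p k))) • Pr.mulVec (S.mulVec (p k)) := by
      rw [hrr k, Matrix.mulVec_sub, Matrix.mulVec_smul]
    rw [h, dotProduct_sub, dotProduct_smul, hd k, hb k, smul_eq_mul, zero_sub]
  rw [hG]
  field_simp
end

section
/- (Best approximation property of the ReK method.) If the ReK directions p₀, p₁, …, p_{q−1} are all nonzero, then for every k = 1, 2, …, q the ReK iterate x_k minimizes φ over the shifted restricted Krylov subspace x₀ + K_C(r₀; k−1) ⊆ R(C). -/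
open Matrix

/-- Span of the first `k` terms of a sequence. -/
def rekK {n : ℕ} (g : ℕ → Fin n → ℝ) (k : ℕ) : Submodule ℝ (Fin n → ℝ) :=
  Submodule.span ℝ (Set.range fun j : Fin k => g j)

lemma rekK_gen {n : ℕ} (g : ℕ → Fin n → ℝ) {j k : ℕ} (h : j < k) : g j ∈ rekK g k :=
  Submodule.subset_span ⟨⟨j, h⟩, rfl⟩

lemma rekK_le {n : ℕ} (g : ℕ → Fin n → ℝ) (k : ℕ) (T : Submodule ℝ (Fin n → ℝ))
    (h : ∀ j, j < k → g j ∈ T) : rekK g k ≤ T := by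
  refine Submodule.span_le.2 ?_
  rintro _ ⟨j, rfl⟩
  exact h j j.2

lemma rekK_mono {n : ℕ} (g : ℕ → Fin n → ℝ) (k : ℕ) : rekK g k ≤ rekK g (k + 1) :=
  rekK_le g k _ fun _ hj => rekK_gen g (by omega)

lemma rekK_succ {n : ℕ} (g : ℕ → Fin n → ℝ) (k : ℕ) (v : Fin n → ℝ) (hv : v ∈ rekK g (k + 1)) :
    ∃ w ∈ rekK g k, ∃ c : ℝ, v = w + c • g k := by
  have : rekK g (k + 1) ≤ rekK g k ⊔ Submodule.span ℝ {g k} := by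
    refine rekK_le g _ _ fun j hj => ?_
    rcases Nat.lt_succ_iff_lt_or_eq.1 hj with h | rfl
    · exact Submodule.mem_sup_left (rekK_gen g h)
    · exact Submodule.mem_sup_right (Submodule.mem_span_singleton_self _)
  obtain ⟨w, hw, y, hy, e⟩ := Submodule.mem_sup.1 (this hv)
  obtain ⟨c, rfl⟩ := Submodule.mem_span_singleton.1 hy
  exact ⟨w, hw, c, e.symm⟩

lemma sym_dot {n : ℕ} (A : Matrix (Fin n) (Fin n) ℝ) (hA : Aᵀ = A) (u v : Fin n → ℝ) :
    A.mulVec u ⬝ᵥ v = u ⬝ᵥ A.mulVec v := by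
  rw [Matrix.dotProduct_mulVec, ← Matrix.mulVec_transpose, hA]

/-- Best approximation property of the ReK method: if the ReK directions
`p₀, …, p_{q−1}` are all nonzero, then for every `k = 1, …, q` the iterate `x_k`
minimizes `φ(x) = (1/2) xᵀSx − bᵀx` over the shifted restricted Krylov subspace
`x₀ + K_C(r₀; k−1)`, which is contained in `R(C)`. -/
theorem rek_best_approximation
    (n m : ℕ) (hn : 0 < n) (hm : 0 < m)
    (S : Matrix (Fin n) (Fin n) ℝ) (hS : S.PosDef)
    (C : Matrix (Fin n) (Fin m) ℝ) (b : Fin n → ℝ)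
    (q : ℕ) (hq : q = C.rank)
    (Pr : Matrix (Fin n) (Fin n) ℝ)
    (hPrSym : Prᵀ = Pr) (hPrIdem : Pr * Pr = Pr)
    (hPrRange : LinearMap.range Pr.mulVecLin = LinearMap.range C.mulVecLin)
    (x p r : ℕ → (Fin n → ℝ))
    (hr : ∀ k, r k = b - S.mulVec (x k))
    (hx0 : x 0 ∈ LinearMap.range C.mulVecLin)
    (hp0 : p 0 = Pr.mulVec (r 0))
    (hprec : ∀ k : ℕ, p (k + 1) = Pr.mulVec (r (k + 1)) +
        (-(r (k + 1) ⬝ᵥ Pr.mulVec (S.mulVec (p k))) / (p k ⬝ᵥ S.mulVec (p k))) • p k)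
    (hxrec : ∀ k : ℕ, x (k + 1) = x k +
        ((r k ⬝ᵥ p k) / (p k ⬝ᵥ S.mulVec (p k))) • p k)
    (hpnz : ∀ k, k < q → p k ≠ 0) :
    ∀ k : ℕ, 1 ≤ k → k ≤ q →
      (x k - x 0 ∈ Submodule.span ℝ (Set.range fun j : Fin k =>
          ((Pr * S) ^ (j : ℕ)).mulVec (Pr.mulVec (r 0)))) ∧
      (∀ z : Fin n → ℝ,
        z - x 0 ∈ Submodule.span ℝ (Set.range fun j : Fin k =>
            ((Pr * S) ^ (j : ℕ)).mulVec (Pr.mulVec (r 0))) →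
          z ∈ LinearMap.range C.mulVecLin) ∧
      (∀ z : Fin n → ℝ,
        z - x 0 ∈ Submodule.span ℝ (Set.range fun j : Fin k =>
            ((Pr * S) ^ (j : ℕ)).mulVec (Pr.mulVec (r 0))) →
          (1 / 2 : ℝ) * (x k ⬝ᵥ S.mulVec (x k)) - b ⬝ᵥ x k ≤
            (1 / 2 : ℝ) * (z ⬝ᵥ S.mulVec z) - b ⬝ᵥ z) := by
  set g : ℕ → Fin n → ℝ := fun j => ((Pr * S) ^ j).mulVec (Pr.mulVec (r 0)) with hg
  have hSs : Sᵀ = S := by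
    have := hS.isHermitian.eq
    rwa [Matrix.conjTranspose_eq_transpose_of_trivial] at this
  have hpos : ∀ v : Fin n → ℝ, v ≠ 0 → 0 < v ⬝ᵥ S.mulVec v := fun v hv => by
    simpa using hS.dotProduct_mulVec_pos hv
  have hnn : ∀ v : Fin n → ℝ, 0 ≤ v ⬝ᵥ S.mulVec v := fun v => by
    by_cases h : v = 0
    · simp [h]
    · exact (hpos v h).le
  have hgs : ∀ j, Pr.mulVec (S.mulVec (g j)) = g (j + 1) := fun j => by
    simp only [hg, Matrix.mulVec_mulVec, pow_succ', Matrix.mul_assoc]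
  have hKs : ∀ k v, v ∈ rekK g k → Pr.mulVec (S.mulVec v) ∈ rekK g (k + 1) := by
    intro k v hv
    have : rekK g k ≤ (rekK g (k + 1)).comap (Pr.mulVecLin ∘ₗ S.mulVecLin) := by
      refine rekK_le g k _ fun j hj => ?_
      simp only [Submodule.mem_comap, LinearMap.comp_apply, Matrix.mulVecLin_apply, hgs]
      exact rekK_gen g (by omega)
    simpa using this hv
  have hg0 : g 0 = Pr.mulVec (r 0) := by simp [hg]
  have hKR : ∀ k, rekK g k ≤ LinearMap.range C.mulVecLin := by
    intro k
    rw [← hPrRange]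
    refine rekK_le g k _ fun j _ => ?_
    cases j with
    | zero => exact ⟨r 0, by rw [hg0]; rfl⟩
    | succ j => exact ⟨S.mulVec (g j), by rw [← hgs]; rfl⟩
  have hrs : ∀ k, r (k + 1) = r k -
      ((r k ⬝ᵥ p k) / (p k ⬝ᵥ S.mulVec (p k))) • S.mulVec (p k) := by
    intro k
    rw [hr (k + 1), hxrec, Matrix.mulVec_add, Matrix.mulVec_smul]
    conv_rhs => rw [hr k]
    rw [hr k]
    abel
  have hA : ∀ k, Pr.mulVec (r k) ∈ rekK g (k + 1) ∧ p k ∈ rekK g (k + 1) := by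
    intro k
    induction k with
    | zero => rw [hp0, ← hg0]; exact ⟨rekK_gen g (by omega), rekK_gen g (by omega)⟩
    | succ k ih =>
      have h1 : Pr.mulVec (r (k + 1)) ∈ rekK g (k + 1 + 1) := by
        rw [hrs, Matrix.mulVec_sub, Matrix.mulVec_smul]
        exact Submodule.sub_mem _ (rekK_mono g _ ih.1) (Submodule.smul_mem _ _ (hKs _ _ ih.2))
      refine ⟨h1, ?_⟩
      rw [hprec]
      exact Submodule.add_mem _ h1 (Submodule.smul_mem _ _ (rekK_mono g _ ih.2))
  have hX : ∀ k, x k - x 0 ∈ rekK g k := by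
    intro k
    induction k with
    | zero => simp
    | succ k ih =>
      rw [hxrec, add_sub_right_comm]
      exact Submodule.add_mem _ (rekK_mono g _ ih) (Submodule.smul_mem _ _ (hA k).2)
  have hB : ∀ k, k ≤ q → ∀ v ∈ rekK g k, r k ⬝ᵥ v = 0 ∧ p k ⬝ᵥ S.mulVec v = 0 := by
    intro k
    induction k with
    | zero =>
      intro _ v hv
      have : v = 0 := by simpa [rekK] using hv
      simp [this]
    | succ k ih =>
      intro hk
      have ih := ih (by omega)
      have hpp := hpos _ (hpnz k (by omega))
      have hdec : ∀ v ∈ rekK g (k + 1), ∃ w ∈ rekK g k, ∃ c : ℝ, v = w + c • p k := by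
        intro v hv
        obtain ⟨w, hw, c, rfl⟩ := rekK_succ g k v hv
        obtain ⟨w', hw', c', e⟩ := rekK_succ g k _ (hA k).2
        have hc : c' ≠ 0 := by
          rintro rfl
          rw [zero_smul, add_zero] at e
          have := (ih _ hw').2
          rw [← e] at this
          exact hpp.ne' this
        refine ⟨w - (c / c') • w', Submodule.sub_mem _ hw (Submodule.smul_mem _ _ hw'),
          c / c', ?_⟩
        rw [e, smul_add, smul_smul, div_mul_cancel₀ _ hc]
        abel
      have hR : ∀ v ∈ rekK g (k + 1), r (k + 1) ⬝ᵥ v = 0 := by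
        intro v hv
        obtain ⟨w, hw, c, rfl⟩ := hdec v hv
        obtain ⟨h1, h2⟩ := ih w hw
        rw [hrs]
        simp only [sub_dotProduct, smul_dotProduct, dotProduct_add, dotProduct_smul,
          sym_dot S hSs, smul_eq_mul, h1, h2]
        field_simp
        ring
      intro v hv
      refine ⟨hR v hv, ?_⟩
      obtain ⟨w, hw, c, rfl⟩ := hdec v hv
      have h2 := (ih w hw).2
      have h3 := hR _ (hKs k w hw)
      rw [hprec]
      simp only [Matrix.mulVec_add, Matrix.mulVec_smul, add_dotProduct, smul_dotProduct,
        dotProduct_add, dotProduct_smul, sym_dot Pr hPrSym, smul_eq_mul, h2, h3]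
      field_simp
      ring
  intro k _ hk
  refine ⟨hX k, fun z hz => ?_, fun z hz => ?_⟩
  · have := Submodule.add_mem _ (hKR k hz) hx0
    rwa [sub_add_cancel] at this
  · have hd : z - x k ∈ rekK g k := by
      have := Submodule.sub_mem _ (show z - x 0 ∈ rekK g k from hz) (hX k)
      rwa [sub_sub_sub_cancel_right] at this
    obtain ⟨d, rfl⟩ : ∃ d, z = x k + d := ⟨z - x k, by abel⟩
    rw [add_sub_cancel_left] at hd
    have h1 := (hB k hk d hd).1
    rw [hr, sub_dotProduct, sym_dot S hSs] at h1
    have h2 : d ⬝ᵥ S.mulVec (x k) = x k ⬝ᵥ S.mulVec d := by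
      rw [dotProduct_comm, sym_dot S hSs]
    simp only [Matrix.mulVec_add, add_dotProduct, dotProduct_add, h2]
    linarith [hnn d]
end

section
/- (Matricized Khatri-Rao product; correctness of the lazy Khatri-Rao evaluation.) For any n×n block matrices K, S ∈ ℝ^{R×R} and any block-diagonal matrix B = diag(B₁,…,Bₙ) with Bᵢ ∈ ℝ^{rᵢ×rᵢ}, the Khatri-Rao product acts on the block-diagonal vectorization by (K ⊙ S)·odvec(B) = odvec(diag(C₁,…,Cₙ)), where the i-th diagonal block is Cᵢ = Σ_{i'=1}^{n} S_{i i'} B_{i'} K_{i i'}ᵀ. -/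
open Matrix

/-- The `(i₁, i₂)` block of an `n × n` block matrix indexed by `Σ i, Fin (r i)`. -/
def blockOf {n : ℕ} {r : Fin n → ℕ}
    (M : Matrix (Σ i : Fin n, Fin (r i)) (Σ i : Fin n, Fin (r i)) ℝ)
    (i₁ i₂ : Fin n) : Matrix (Fin (r i₁)) (Fin (r i₂)) ℝ :=
  fun a b => M ⟨i₁, a⟩ ⟨i₂, b⟩

/-- Block-diagonal (column-major) vectorization: stack the vectorizations
`vec(B₁), …, vec(Bₙ)` of the diagonal blocks.  With this indexing, the entry at
`⟨i, (a, c)⟩` is `Bᵢ[c, a]`, so that the Kronecker/vec convention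
`(A ⊗ B)·vec(X) = vec(B X Aᵀ)` holds for the Khatri-Rao product below. -/
def odvec {n : ℕ} {r : Fin n → ℕ}
    (Bs : ∀ i : Fin n, Matrix (Fin (r i)) (Fin (r i)) ℝ) :
    (Σ i : Fin n, Fin (r i) × Fin (r i)) → ℝ :=
  fun s => Bs s.1 s.2.2 s.2.1

/-- Block-wise Khatri-Rao product: the `(i₁, i₂)` block is the Kronecker product
`K_{i₁i₂} ⊗ S_{i₁i₂}` of the corresponding blocks. -/
def khatriRao {n : ℕ} {r : Fin n → ℕ}
    (K S : Matrix (Σ i : Fin n, Fin (r i)) (Σ i : Fin n, Fin (r i)) ℝ) :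
    Matrix (Σ i : Fin n, Fin (r i) × Fin (r i)) (Σ i : Fin n, Fin (r i) × Fin (r i)) ℝ :=
  fun s t => K ⟨s.1, s.2.1⟩ ⟨t.1, t.2.1⟩ * S ⟨s.1, s.2.2⟩ ⟨t.1, t.2.2⟩

/-- Matricized Khatri-Rao product: for block matrices `K, S` and a block-diagonal
matrix `B = diag(B₁,…,Bₙ)`, one has `(K ⊙ S)·odvec(B) = odvec(diag(C₁,…,Cₙ))` with
`Cᵢ = Σ_{i'} S_{i i'} B_{i'} K_{i i'}ᵀ`. -/
theorem khatriRao_mulVec_odvec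
    (n : ℕ) (hn : 0 < n) (r : Fin n → ℕ) (hr : ∀ i, 0 < r i)
    (K S : Matrix (Σ i : Fin n, Fin (r i)) (Σ i : Fin n, Fin (r i)) ℝ)
    (Bs : ∀ i : Fin n, Matrix (Fin (r i)) (Fin (r i)) ℝ) :
    (khatriRao K S).mulVec (odvec Bs) =
      odvec (fun i => ∑ i' : Fin n, blockOf S i i' * Bs i' * (blockOf K i i')ᵀ) := by
  funext s
  obtain ⟨i, a, c⟩ := s
  simp only [Matrix.mulVec, dotProduct, odvec, khatriRao, Matrix.sum_apply, Matrix.mul_apply,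
    Matrix.transpose_apply, blockOf, Fintype.sum_sigma, Fintype.sum_prod_type, Finset.sum_mul]
  refine Finset.sum_congr rfl fun j _ => Finset.sum_congr rfl fun x _ =>
    Finset.sum_congr rfl fun y _ => ?_
  ring
end

section
/- (Spectral decomposition of the covariance quadratic form on the range of the Gram matrix.) Under the stated hypotheses, for all w₁, w₂ ∈ ℝ^R, setting f₁ = K w₁ and f₂ = K w₂, one has f₁ᵀ B f₂ = f₁ᵀ U Λ Uᵀ f₂ = Σ_{l=1}^{q} λ_l · (f₁ᵀ u_l)(u_lᵀ f₂), where u₁,…,u_q are the columns of U; in particular, the value f₁ᵀ U Λ Uᵀ f₂ does not depend on the choice of U satisfying K^{1/2}U = V. -/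
open Matrix

/-- Spectral decomposition of the covariance quadratic form on the range of the Gram
matrix: under the stated hypotheses, for all `w₁, w₂ ∈ ℝ^R`, setting `f₁ = K w₁` and
`f₂ = K w₂`, one has `f₁ᵀ B f₂ = f₁ᵀ U Λ Uᵀ f₂ = Σ_l λ_l (f₁ᵀ u_l)(u_lᵀ f₂)`, where
`u₁,…,u_q` are the columns of `U`; in particular, the value `f₁ᵀ U Λ Uᵀ f₂` does not
depend on the choice of `U` satisfying `K^{1/2} U = V`. -/
theorem covariance_spectral_decomposition_on_range
    (R q : ℕ) (hR : 0 < R) (hq : 0 < q)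
    (K : Matrix (Fin R) (Fin R) ℝ) (hK : K.PosSemidef)
    (Khalf : Matrix (Fin R) (Fin R) ℝ) (hKhalf : Khalf.PosSemidef)
    (hKhalfSq : Khalf * Khalf = K)
    (B : Matrix (Fin R) (Fin R) ℝ) (hB : Bᵀ = B)
    (lam : Fin q → ℝ) (hlam : ∀ l, lam l ≠ 0)
    (V : Matrix (Fin R) (Fin q) ℝ) (hV : Vᵀ * V = 1)
    (hspec : Khalf * B * Khalf = V * Matrix.diagonal lam * Vᵀ)
    (U : Matrix (Fin R) (Fin q) ℝ) (hU : Khalf * U = V) :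
    ∀ w₁ w₂ : Fin R → ℝ,
      (K.mulVec w₁) ⬝ᵥ B.mulVec (K.mulVec w₂) =
        (K.mulVec w₁) ⬝ᵥ (U * Matrix.diagonal lam * Uᵀ).mulVec (K.mulVec w₂) ∧
      (K.mulVec w₁) ⬝ᵥ (U * Matrix.diagonal lam * Uᵀ).mulVec (K.mulVec w₂) =
        ∑ l : Fin q, lam l *
          (((K.mulVec w₁) ⬝ᵥ (fun i => U i l)) * ((fun i => U i l) ⬝ᵥ (K.mulVec w₂))) ∧
      ∀ U' : Matrix (Fin R) (Fin q) ℝ, Khalf * U' = V →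
        (K.mulVec w₁) ⬝ᵥ (U * Matrix.diagonal lam * Uᵀ).mulVec (K.mulVec w₂) =
          (K.mulVec w₁) ⬝ᵥ (U' * Matrix.diagonal lam * U'ᵀ).mulVec (K.mulVec w₂) := by
  have hKt : Kᵀ = K := by
    have h := hK.1.eq
    rwa [conjTranspose_eq_transpose_of_trivial] at h
  have hKht : Khalfᵀ = Khalf := by
    have h := hKhalf.1.eq
    rwa [conjTranspose_eq_transpose_of_trivial] at h
  have move : ∀ (M : Matrix (Fin R) (Fin R) ℝ) (w₁ w₂ : Fin R → ℝ),
      (K.mulVec w₁) ⬝ᵥ M.mulVec (K.mulVec w₂) = w₁ ⬝ᵥ (K * M * K).mulVec w₂ := by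
    intro M w₁ w₂
    rw [← mulVec_mulVec, ← mulVec_mulVec, dotProduct_mulVec w₁ K, ← mulVec_transpose, hKt]
  have key : ∀ W : Matrix (Fin R) (Fin q) ℝ, Khalf * W = V →
      K * (W * Matrix.diagonal lam * Wᵀ) * K = K * B * K := by
    intro W hW
    have hWt : Wᵀ * Khalf = Vᵀ := by
      rw [← hW, transpose_mul, hKht]
    calc K * (W * Matrix.diagonal lam * Wᵀ) * K
        = Khalf * ((Khalf * W) * Matrix.diagonal lam * (Wᵀ * Khalf)) * Khalf := by
          rw [← hKhalfSq]; simp only [Matrix.mul_assoc]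
      _ = Khalf * (Khalf * B * Khalf) * Khalf := by rw [hW, hWt, hspec]
      _ = K * B * K := by rw [← hKhalfSq]; simp only [Matrix.mul_assoc]
  intro w₁ w₂
  refine ⟨?_, ?_, ?_⟩
  · rw [move, move, key U hU]
  · rw [← mulVec_mulVec, ← mulVec_mulVec, dotProduct_mulVec _ U]
    simp only [dotProduct, mulVec_diagonal]
    refine Finset.sum_congr rfl fun l _ => ?_
    simp only [vecMul, mulVec, dotProduct, transpose_apply]
    ring
  · intro U' hU'
    rw [move, move, key U hU, key U' hU']
end
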